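/- Let F be a propositional formula built from propositional formulas F₁,…,F_m using only the connectives ∧, ∨, →, ¬, ⊤, ⊥. Then for every Heyting algebra H and every valuation v of propositional formulas in H that interprets ∧, ∨, → by the Heyting operations ⊓, ⊔, ⇨ and interprets ¬G as v(G) ⇨ ⊥, the inequality ⨅_{i=1}^m (v(Fᵢ) ⊔ (v(Fᵢ) ⇨ ⊥)) ≤ v(F) ⊔ (v(F) ⇨ ⊥) holds. (By algebraic completeness of intuitionistic propositional logic, this expresses that F ∨ ¬F is intuitionistically derivable from the hypotheses F₁ ∨ ¬F₁, …, F_m ∨ ¬F_m.) -/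

import Mathlib

/-- Propositional formulas built from generators (here: the formulas `F₁,…,F_m`,
represented by variables) using `∧`, `∨`, `→`, `¬`, `⊤`, `⊥`. -/
inductive PropForm (α : Type) where
  | var : α → PropForm α
  | top : PropForm α
  | bot : PropForm α
  | and : PropForm α → PropForm α → PropForm α
  | or : PropForm α → PropForm α → PropForm α
  | imp : PropForm α → PropForm α → PropForm α
  | not : PropForm α → PropForm α

/-- Evaluation of a propositional formula in a Heyting algebra: `∧`, `∨`, `→` are
interpreted by `⊓`, `⊔`, `⇨`, and `¬ G` by `v(G) ⇨ ⊥`. -/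
def PropForm.eval {α : Type} {H : Type*} [HeytingAlgebra H] (v : α → H) :
    PropForm α → H
  | .var a => v a
  | .top => ⊤
  | .bot => ⊥
  | .and F G => F.eval v ⊓ G.eval v
  | .or F G => F.eval v ⊔ G.eval v
  | .imp F G => F.eval v ⇨ G.eval v
  | .not F => F.eval v ⇨ ⊥

section ExcludedMiddle

variable {H : Type*} [HeytingAlgebra H]

/-- The instance `a ⊔ aᶜ` of excluded middle at `a`. This is the order dual of
`Coheyting.boundary`: in the lattice of open sets it is the complement of the boundary. -/
def excludedMiddle (a : H) : H :=
  a ⊔ aᶜ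

theorem excludedMiddle_top : excludedMiddle (⊤ : H) = ⊤ :=
  top_sup_eq _

theorem excludedMiddle_bot : excludedMiddle (⊥ : H) = ⊤ := by
  rw [excludedMiddle, compl_bot, sup_top_eq]

theorem le_excludedMiddle_inf (a b : H) :
    excludedMiddle a ⊓ excludedMiddle b ≤ excludedMiddle (a ⊓ b) :=
  Coheyting.boundary_sup_le (a := OrderDual.toDual a) (b := OrderDual.toDual b)

theorem le_excludedMiddle_sup (a b : H) :
    excludedMiddle a ⊓ excludedMiddle b ≤ excludedMiddle (a ⊔ b) :=
  Coheyting.boundary_inf_le (a := OrderDual.toDual a) (b := OrderDual.toDual b)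

theorem inf_compl_le_compl_himp (a b : H) : a ⊓ bᶜ ≤ (a ⇨ b)ᶜ := by
  have modus_ponens : a ⊓ (a ⇨ b) ≤ b := inf_himp_le
  rw [le_compl_iff_disjoint_right, disjoint_iff_inf_le, inf_right_comm]
  exact (inf_le_inf_right bᶜ modus_ponens).trans disjoint_compl_right.le_bot

theorem le_excludedMiddle_himp (a b : H) :
    excludedMiddle a ⊓ excludedMiddle b ≤ excludedMiddle (a ⇨ b) :=
  calc
    (a ⊔ aᶜ) ⊓ (b ⊔ bᶜ) = (a ⊔ aᶜ) ⊓ b ⊔ (a ⊓ bᶜ ⊔ aᶜ ⊓ bᶜ) := by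
      rw [inf_sup_left, inf_sup_right a aᶜ bᶜ]
    _ ≤ (a ⇨ b) ⊔ ((a ⇨ b)ᶜ ⊔ (a ⇨ b)) :=
      sup_le_sup (inf_le_right.trans le_himp)
        (sup_le_sup (inf_compl_le_compl_himp a b) (inf_le_left.trans compl_le_himp))
    _ = (a ⇨ b) ⊔ (a ⇨ b)ᶜ := by rw [sup_comm (a ⇨ b)ᶜ, sup_left_idem]

theorem excludedMiddle_le_excludedMiddle_compl (a : H) :
    excludedMiddle a ≤ excludedMiddle aᶜ := by
  simpa only [excludedMiddle_bot, inf_top_eq, himp_bot] using le_excludedMiddle_himp a ⊥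

end ExcludedMiddle

theorem excluded_middle_combination_general {α : Type} (F : PropForm α) {H : Type*}
    [HeytingAlgebra H] (v : α → H) {x : H} (hx : ∀ a, x ≤ excludedMiddle (v a)) :
    x ≤ excludedMiddle (F.eval v) := by
  induction F with
  | var a => exact hx a
  | top => exact le_top.trans_eq excludedMiddle_top.symm
  | bot => exact le_top.trans_eq excludedMiddle_bot.symm
  | and F G hF hG => exact (le_inf hF hG).trans (le_excludedMiddle_inf _ _)
  | or F G hF hG => exact (le_inf hF hG).trans (le_excludedMiddle_sup _ _)
  | imp F G hF hG => exact (le_inf hF hG).trans (le_excludedMiddle_himp _ _)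
  | not F hF =>
    rw [PropForm.eval, himp_bot]
    exact hF.trans (excludedMiddle_le_excludedMiddle_compl _)

/-- If `F` is a propositional combination of `F₁,…,F_m`, then in every Heyting algebra
`⨅ᵢ (v(Fᵢ) ⊔ (v(Fᵢ) ⇨ ⊥)) ≤ v(F) ⊔ (v(F) ⇨ ⊥)`; i.e., `F ∨ ¬F` is intuitionistically
derivable from `F₁ ∨ ¬F₁, …, F_m ∨ ¬F_m`. -/
theorem excluded_middle_combination (m : ℕ) (F : PropForm (Fin m))
    (H : Type*) [HeytingAlgebra H] (v : Fin m → H) :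
    (Finset.univ.inf fun i : Fin m => v i ⊔ (v i ⇨ ⊥)) ≤
      F.eval v ⊔ (F.eval v ⇨ ⊥) := by
  simp only [himp_bot]
  exact excluded_middle_combination_general F v fun i => Finset.inf_le (Finset.mem_univ i)
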